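/- Let A, B, C, D ∈ ℝ² be the vertices, listed in cyclic order, of a nondegenerate convex quadrilateral (so that the triangles ABC and ACD are nondegenerate), with areas |ΔABC| and |ΔACD|. For values u(A), u(B), u(C), u(D) ∈ ℝ², set E_poly(u) = (‖u(A)−u(B)‖−‖A−B‖)² + (‖u(B)−u(C)‖−‖B−C‖)² + (‖u(C)−u(D)‖−‖C−D‖)², and ‖∇u‖² = ‖G₁‖²·|ΔABC| + ‖G₂‖²·|ΔACD|, where G₁ is the affine interpolation gradient on triangle ABC and G₂ is the affine interpolation gradient on triangle ACD. Then there exist positive constants c₁, c₂, c₃, depending only on A, B, C, D, such that for all u: E_poly(u) ≤ c₁ ( ‖∇u‖² + |ΔABC| + |ΔACD| ) and E_poly(u) ≥ c₂ ‖∇u‖² − c₃ ( |ΔABC| + |ΔACD| ). -/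

import Mathlib

/-- The matrix with columns `v` and `w`. -/
noncomputable def colMat (v w : EuclideanSpace ℝ (Fin 2)) : Matrix (Fin 2) (Fin 2) ℝ :=
  Matrix.of fun i j => ![v i, w i] j

/-- The affine interpolation gradient determined by the points `x₁, x₂, x₃` and the
values `u₁, u₂, u₃`: `(u₁−u₂ | u₂−u₃) · (x₁−x₂ | x₂−x₃)⁻¹`. -/
noncomputable def gradMat (x₁ x₂ x₃ u₁ u₂ u₃ : EuclideanSpace ℝ (Fin 2)) :
    Matrix (Fin 2) (Fin 2) ℝ :=
  colMat (u₁ - u₂) (u₂ - u₃) * (colMat (x₁ - x₂) (x₂ - x₃))⁻¹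

/-- Squared Frobenius norm of a 2×2 matrix. -/
noncomputable def frobSq (M : Matrix (Fin 2) (Fin 2) ℝ) : ℝ :=
  ∑ i, ∑ j, (M i j) ^ 2

/-- Area of the triangle with vertices `A`, `B`, `C`. -/
noncomputable def triArea (A B C : EuclideanSpace ℝ (Fin 2)) : ℝ :=
  (MeasureTheory.volume (convexHull ℝ {A, B, C})).toReal

/-- The quadrilateral spring energy
`E_poly(u) = (‖u(A)−u(B)‖−‖A−B‖)² + (‖u(B)−u(C)‖−‖B−C‖)² + (‖u(C)−u(D)‖−‖C−D‖)²`. -/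
noncomputable def quadEnergy (A B C D uA uB uC uD : EuclideanSpace ℝ (Fin 2)) : ℝ :=
  (‖uA - uB‖ - ‖A - B‖) ^ 2 + (‖uB - uC‖ - ‖B - C‖) ^ 2 + (‖uC - uD‖ - ‖C - D‖) ^ 2

/-- `‖∇u‖²` for the quadrilateral `ABCD` triangulated by `ABC` and `ACD`. -/
noncomputable def quadGradSq (A B C D uA uB uC uD : EuclideanSpace ℝ (Fin 2)) : ℝ :=
  frobSq (gradMat A B C uA uB uC) * triArea A B C +
    frobSq (gradMat A C D uA uC uD) * triArea A C D

/-!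
The gradient on a triangle and the matrix of its two edge differences determine each other by
multiplication with a fixed invertible matrix, so its squared Frobenius norm is comparable to the
sum of the two squared deformed edge lengths. Summing over both triangles, `‖∇u‖²` is comparable
to `‖u(A) - u(B)‖² + ‖u(B) - u(C)‖² + ‖u(C) - u(D)‖²`: the diagonal difference `u(A) - u(C)`,
which carries no spring, is controlled by the triangle inequality. The spring energy in turn
differs from this sum only by bounded factors and an additive constant, which the positive area
absorbs.
-/

section SpringEnergy

variable {E F : Type*} [SeminormedAddCommGroup E] [SeminormedAddCommGroup F]

/-- The sum of the squared edge lengths of the open polygon `P Q R S`, applied both to the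
vertices of the quadrilateral and to their values under `u`. The closing edge `S P` is left out
because it carries no spring in `quadEnergy`. -/
def sqEdgeSum (P Q R S : E) : ℝ :=
  ‖P - Q‖ ^ 2 + ‖Q - R‖ ^ 2 + ‖R - S‖ ^ 2

lemma sq_norm_sub_norm_le (v : E) (w : F) : (‖v‖ - ‖w‖) ^ 2 ≤ ‖v‖ ^ 2 + ‖w‖ ^ 2 := by
  nlinarith [mul_nonneg (norm_nonneg v) (norm_nonneg w)]

lemma sq_norm_le_two_mul_sq_norm_sub_norm_add (v : E) (w : F) :
    ‖v‖ ^ 2 ≤ 2 * ((‖v‖ - ‖w‖) ^ 2 + ‖w‖ ^ 2) := by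
  simpa using add_sq_le (a := ‖v‖ - ‖w‖) (b := ‖w‖)

lemma sq_norm_sub_le_two_mul (P Q R : E) :
    ‖P - R‖ ^ 2 ≤ 2 * (‖P - Q‖ ^ 2 + ‖Q - R‖ ^ 2) :=
  calc ‖P - R‖ ^ 2 ≤ (‖P - Q‖ + ‖Q - R‖) ^ 2 := by
        gcongr
        exact norm_sub_le_norm_sub_add_norm_sub ..
    _ ≤ 2 * (‖P - Q‖ ^ 2 + ‖Q - R‖ ^ 2) := add_sq_le

end SpringEnergy

lemma sqEdgeSum_pos_of_ne {E : Type*} [NormedAddCommGroup E] {P Q : E} (h : P ≠ Q) (R S : E) :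
    0 < sqEdgeSum P Q R S := by
  have hPQ : 0 < ‖P - Q‖ := norm_sub_pos_iff.2 h
  unfold sqEdgeSum
  positivity

lemma quadEnergy_le_sqEdgeSum_add (A B C D uA uB uC uD : EuclideanSpace ℝ (Fin 2)) :
    quadEnergy A B C D uA uB uC uD ≤ sqEdgeSum uA uB uC uD + sqEdgeSum A B C D := by
  unfold quadEnergy sqEdgeSum
  linarith [sq_norm_sub_norm_le (uA - uB) (A - B), sq_norm_sub_norm_le (uB - uC) (B - C),
    sq_norm_sub_norm_le (uC - uD) (C - D)]

lemma sqEdgeSum_le_two_mul_quadEnergy_add (A B C D uA uB uC uD : EuclideanSpace ℝ (Fin 2)) :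
    sqEdgeSum uA uB uC uD ≤ 2 * (quadEnergy A B C D uA uB uC uD + sqEdgeSum A B C D) := by
  unfold quadEnergy sqEdgeSum
  linarith [sq_norm_le_two_mul_sq_norm_sub_norm_add (uA - uB) (A - B),
    sq_norm_le_two_mul_sq_norm_sub_norm_add (uB - uC) (B - C),
    sq_norm_le_two_mul_sq_norm_sub_norm_add (uC - uD) (C - D)]

section Frobenius

open scoped Matrix.Norms.Frobenius

lemma frobSq_eq_sq_norm (M : Matrix (Fin 2) (Fin 2) ℝ) : frobSq M = ‖M‖ ^ 2 := by
  simp only [frobSq, Matrix.frobenius_norm_def, ← Real.sqrt_eq_rpow, Real.rpow_two,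
    Real.norm_eq_abs, sq_abs]
  rw [Real.sq_sqrt (by positivity)]

lemma frobSq_nonneg (M : Matrix (Fin 2) (Fin 2) ℝ) : 0 ≤ frobSq M := by
  rw [frobSq_eq_sq_norm]
  positivity

lemma frobSq_mul_le (M N : Matrix (Fin 2) (Fin 2) ℝ) :
    frobSq (M * N) ≤ frobSq M * frobSq N := by
  simp only [frobSq_eq_sq_norm, ← mul_pow]
  gcongr
  exact Matrix.frobenius_norm_mul M N

end Frobenius

lemma frobSq_colMat (v w : EuclideanSpace ℝ (Fin 2)) :
    frobSq (colMat v w) = ‖v‖ ^ 2 + ‖w‖ ^ 2 := by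
  simp only [frobSq, colMat, Matrix.of_apply, EuclideanSpace.real_norm_sq_eq, Fin.sum_univ_two,
    Matrix.cons_val_zero, Matrix.cons_val_one]
  ring

lemma colMat_eq_toMatrix (v w : EuclideanSpace ℝ (Fin 2)) :
    colMat v w = (EuclideanSpace.basisFun (Fin 2) ℝ).toBasis.toMatrix ![v, w] := by
  ext i j
  fin_cases j <;> simp [colMat, Module.Basis.toMatrix_apply]

lemma isUnit_det_colMat_of_linearIndependent {v w : EuclideanSpace ℝ (Fin 2)}
    (h : LinearIndependent ℝ ![v, w]) : IsUnit (colMat v w).det := by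
  have hspan : Submodule.span ℝ (Set.range ![v, w]) = ⊤ :=
    h.span_eq_top_of_card_eq_finrank' (by simp)
  rw [colMat_eq_toMatrix, ← Module.Basis.det_apply, ← Module.Basis.is_basis_iff_det]
  exact ⟨h, hspan⟩

lemma affineIndependent_triple_iff_linearIndependent_vsub {k V P : Type*} [Ring k]
    [AddCommGroup V] [Module k V] [AddTorsor V P] (p q r : P) :
    AffineIndependent k ![p, q, r] ↔ LinearIndependent k ![p -ᵥ q, q -ᵥ r] := by
  rw [affineIndependent_iff_linearIndependent_vsub k _ (1 : Fin 3),
    ← linearIndependent_equiv (finSuccAboveEquiv (1 : Fin 3)),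
    ← LinearIndependent.pair_neg_right_iff, neg_vsub_eq_vsub_rev]
  congr! 1
  ext i
  fin_cases i <;> rfl

lemma frobSq_gradMat_le (x₁ x₂ x₃ u₁ u₂ u₃ : EuclideanSpace ℝ (Fin 2)) :
    frobSq (gradMat x₁ x₂ x₃ u₁ u₂ u₃) ≤
      frobSq (colMat (x₁ - x₂) (x₂ - x₃))⁻¹ * (‖u₁ - u₂‖ ^ 2 + ‖u₂ - u₃‖ ^ 2) := by
  rw [mul_comm, ← frobSq_colMat]
  exact frobSq_mul_le _ _

lemma gradMat_mul_colMat {x₁ x₂ x₃ : EuclideanSpace ℝ (Fin 2)}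
    (h : AffineIndependent ℝ ![x₁, x₂, x₃]) (u₁ u₂ u₃ : EuclideanSpace ℝ (Fin 2)) :
    gradMat x₁ x₂ x₃ u₁ u₂ u₃ * colMat (x₁ - x₂) (x₂ - x₃) = colMat (u₁ - u₂) (u₂ - u₃) :=
  Matrix.nonsing_inv_mul_cancel_right _ _ <| isUnit_det_colMat_of_linearIndependent <|
    (affineIndependent_triple_iff_linearIndependent_vsub x₁ x₂ x₃).1 h

lemma sq_norm_sub_add_le_frobSq_gradMat {x₁ x₂ x₃ : EuclideanSpace ℝ (Fin 2)}
    (h : AffineIndependent ℝ ![x₁, x₂, x₃]) (u₁ u₂ u₃ : EuclideanSpace ℝ (Fin 2)) :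
    ‖u₁ - u₂‖ ^ 2 + ‖u₂ - u₃‖ ^ 2 ≤
      (‖x₁ - x₂‖ ^ 2 + ‖x₂ - x₃‖ ^ 2) * frobSq (gradMat x₁ x₂ x₃ u₁ u₂ u₃) := by
  rw [mul_comm, ← frobSq_colMat, ← frobSq_colMat, ← gradMat_mul_colMat h]
  exact frobSq_mul_le _ _

lemma measure_convexHull_range_pos_of_affineIndependent {ι V : Type*} [Fintype ι]
    [NormedAddCommGroup V] [NormedSpace ℝ V] [FiniteDimensional ℝ V] [MeasurableSpace V]
    (μ : MeasureTheory.Measure V) [μ.IsOpenPosMeasure] {p : ι → V} (h : AffineIndependent ℝ p)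
    (hcard : Fintype.card ι = Module.finrank ℝ V + 1) :
    0 < μ (convexHull ℝ (Set.range p)) :=
  μ.measure_pos_of_nonempty_interior <| interior_convexHull_nonempty_iff_affineSpan_eq_top.2 <|
    h.affineSpan_eq_top_iff_card_eq_finrank_add_one.2 hcard

lemma triArea_nonneg (A B C : EuclideanSpace ℝ (Fin 2)) : 0 ≤ triArea A B C :=
  ENNReal.toReal_nonneg

lemma triArea_pos {A B C : EuclideanSpace ℝ (Fin 2)} (h : AffineIndependent ℝ ![A, B, C]) :
    0 < triArea A B C := by
  have hpos := measure_convexHull_range_pos_of_affineIndependent MeasureTheory.volume h (by simp)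
  simp only [Matrix.range_cons, Matrix.range_empty, Set.union_empty, ← Set.insert_eq] at hpos
  have hcompact : IsCompact (convexHull ℝ {A, B, C}) :=
    (Set.toFinite {A, B, C}).isCompact_convexHull ℝ
  exact ENNReal.toReal_pos hpos.ne' hcompact.measure_ne_top

lemma quadGradSq_nonneg (A B C D uA uB uC uD : EuclideanSpace ℝ (Fin 2)) :
    0 ≤ quadGradSq A B C D uA uB uC uD :=
  add_nonneg (mul_nonneg (frobSq_nonneg _) (triArea_nonneg A B C))
    (mul_nonneg (frobSq_nonneg _) (triArea_nonneg A C D))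

lemma exists_sqEdgeSum_le_quadGradSq {A B C D : EuclideanSpace ℝ (Fin 2)}
    (hABC : AffineIndependent ℝ ![A, B, C]) (hACD : AffineIndependent ℝ ![A, C, D]) :
    ∃ K ≥ 0, ∀ uA uB uC uD : EuclideanSpace ℝ (Fin 2),
      sqEdgeSum uA uB uC uD ≤ K * quadGradSq A B C D uA uB uC uD := by
  have hS := triArea_pos hABC
  have hT := triArea_pos hACD
  set S := triArea A B C
  set T := triArea A C D
  set a := ‖A - B‖ ^ 2 + ‖B - C‖ ^ 2
  set b := ‖A - C‖ ^ 2 + ‖C - D‖ ^ 2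
  refine ⟨max (a / S) (b / T), by positivity, fun uA uB uC uD => ?_⟩
  set g := frobSq (gradMat A B C uA uB uC)
  set f := frobSq (gradMat A C D uA uC uD)
  have hg : 0 ≤ g := frobSq_nonneg _
  have hf : 0 ≤ f := frobSq_nonneg _
  calc sqEdgeSum uA uB uC uD
      ≤ (‖uA - uB‖ ^ 2 + ‖uB - uC‖ ^ 2) + (‖uA - uC‖ ^ 2 + ‖uC - uD‖ ^ 2) := by
        unfold sqEdgeSum
        linarith [sq_nonneg ‖uA - uC‖]
    _ ≤ a * g + b * f := add_le_add (sq_norm_sub_add_le_frobSq_gradMat hABC ..)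
        (sq_norm_sub_add_le_frobSq_gradMat hACD ..)
    _ = a / S * (g * S) + b / T * (f * T) := by field_simp
    _ ≤ max (a / S) (b / T) * (g * S) + max (a / S) (b / T) * (f * T) := by
        gcongr
        · exact le_max_left ..
        · exact le_max_right ..
    _ = max (a / S) (b / T) * quadGradSq A B C D uA uB uC uD := (mul_add ..).symm

lemma exists_mul_quadGradSq_le_sqEdgeSum (A B C D : EuclideanSpace ℝ (Fin 2)) :
    ∃ K > 0, ∀ uA uB uC uD : EuclideanSpace ℝ (Fin 2),
      K * quadGradSq A B C D uA uB uC uD ≤ sqEdgeSum uA uB uC uD := by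
  have hS := triArea_nonneg A B C
  have hT := triArea_nonneg A C D
  set S := triArea A B C
  set T := triArea A C D
  set a := frobSq (colMat (A - B) (B - C))⁻¹
  set b := frobSq (colMat (A - C) (C - D))⁻¹
  have ha : 0 ≤ a := frobSq_nonneg _
  have hb : 0 ≤ b := frobSq_nonneg _
  refine ⟨(a * S + 2 * (b * T) + 1)⁻¹, by positivity, fun uA uB uC uD => ?_⟩
  set P := sqEdgeSum uA uB uC uD with hP
  have hABC : ‖uA - uB‖ ^ 2 + ‖uB - uC‖ ^ 2 ≤ P := by
    rw [hP, sqEdgeSum]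
    linarith [sq_nonneg ‖uC - uD‖]
  have hACD : ‖uA - uC‖ ^ 2 + ‖uC - uD‖ ^ 2 ≤ 2 * P := by
    rw [hP, sqEdgeSum]
    linarith [sq_norm_sub_le_two_mul uA uB uC, sq_nonneg ‖uC - uD‖]
  have hP_nonneg : 0 ≤ P := hABC.trans' (by positivity)
  rw [inv_mul_le_iff₀ (by positivity)]
  calc quadGradSq A B C D uA uB uC uD
      ≤ a * (‖uA - uB‖ ^ 2 + ‖uB - uC‖ ^ 2) * S + b * (‖uA - uC‖ ^ 2 + ‖uC - uD‖ ^ 2) * T := by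
        unfold quadGradSq
        gcongr <;> exact frobSq_gradMat_le ..
    _ ≤ a * P * S + b * (2 * P) * T := by gcongr
    _ ≤ (a * S + 2 * (b * T) + 1) * P := by linarith

/-- Upper and lower bounds for the spring energy of a nondegenerate convex quadrilateral
`ABCD` (so the triangles `ABC` and `ACD` are nondegenerate): there are constants
`c₁, c₂, c₃ > 0` depending only on `A, B, C, D` such that for all values
`uA, uB, uC, uD ∈ ℝ²`, `E_poly(u) ≤ c₁(‖∇u‖² + |ΔABC| + |ΔACD|)` and
`E_poly(u) ≥ c₂ ‖∇u‖² − c₃(|ΔABC| + |ΔACD|)`. -/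
theorem quadrilateral_energy_bounds (A B C D : EuclideanSpace ℝ (Fin 2))
    (hABC : AffineIndependent ℝ ![A, B, C]) (hACD : AffineIndependent ℝ ![A, C, D]) :
    ∃ c₁ c₂ c₃ : ℝ, 0 < c₁ ∧ 0 < c₂ ∧ 0 < c₃ ∧
      ∀ uA uB uC uD : EuclideanSpace ℝ (Fin 2),
        quadEnergy A B C D uA uB uC uD ≤
          c₁ * (quadGradSq A B C D uA uB uC uD + (triArea A B C + triArea A C D)) ∧
        quadEnergy A B C D uA uB uC uD ≥
          c₂ * quadGradSq A B C D uA uB uC uD - c₃ * (triArea A B C + triArea A C D) := by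
  have harea : 0 < triArea A B C + triArea A C D := add_pos (triArea_pos hABC) (triArea_pos hACD)
  have hAB : A ≠ B := hABC.injective.ne (a₁ := 0) (a₂ := 1) (by decide)
  have hL : 0 < sqEdgeSum A B C D := sqEdgeSum_pos_of_ne hAB C D
  obtain ⟨K, hK, hK_le⟩ := exists_sqEdgeSum_le_quadGradSq hABC hACD
  obtain ⟨k, hk, hk_le⟩ := exists_mul_quadGradSq_le_sqEdgeSum A B C D
  set area := triArea A B C + triArea A C D
  set L := sqEdgeSum A B C D
  have hL_area : L / area * area = L := div_mul_cancel₀ L harea.ne'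
  refine ⟨K + L / area, k / 2, L / area, by positivity, by positivity, by positivity,
    fun uA uB uC uD => ⟨?_, ?_⟩⟩
  · have hQ : 0 ≤ quadGradSq A B C D uA uB uC uD := quadGradSq_nonneg ..
    calc quadEnergy A B C D uA uB uC uD
        ≤ sqEdgeSum uA uB uC uD + L := quadEnergy_le_sqEdgeSum_add ..
      _ ≤ K * quadGradSq A B C D uA uB uC uD + L / area * area := by
        rw [hL_area]
        gcongr
        exact hK_le ..
      _ ≤ (K + L / area) * (quadGradSq A B C D uA uB uC uD + area) := by
        rw [add_mul]
        gcongr <;> linarith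
  · linarith [hk_le uA uB uC uD, sqEdgeSum_le_two_mul_quadEnergy_add A B C D uA uB uC uD]
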